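/- Let g ≥ 1, n ≥ 3, and let A = (α₁,…,αₙ) be a unit fraction partition of g with α₁ ≤ ⋯ ≤ αₙ; set F_{n−2}(A) = (α₁⋯αₙ)/lcm(α₁,…,αₙ)². If n = 4 and g ∈ {1,2}, then F_{n−2}(A) ≤ 16g² with equality if and only if A = (4g,4g,4g,4g). If (n,g) = (5,1), then F_{n−2}(A) ≤ 128 with equality if and only if A = (2,8,8,8,8). In all other cases F_{n−2}(A) ≤ 3·t_{g,n−2}²/g, with equality if and only if A is one of (12,12,12,12) or (s_{g,1}, …, s_{g,n−3}, 3t_{g,n−2}, 3t_{g,n−2}, 3t_{g,n−2}). -/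

import Mathlib

open Finset

/-- The `g`-Sylvester sequence: `s_{g,1} = g+1`, `s_{g,k+1} = s_{g,k}(s_{g,k}-1)+1`.
(The value at `0` is junk and never used.) -/
def sylv (g : ℕ) : ℕ → ℕ
  | 0 => 0
  | 1 => g + 1
  | k + 2 => sylv g (k + 1) * (sylv g (k + 1) - 1) + 1

/-- The truncated `g`-Sylvester sequence `t_{g,k} = s_{g,k} - 1`. -/
def tsylv (g k : ℕ) : ℕ := sylv g k - 1

/-- `A` is a unit fraction partition of `g`: a tuple of positive integers with
`1/g = ∑ 1/αᵢ`. -/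
def IsUFP {n : ℕ} (g : ℕ) (A : Fin n → ℕ) : Prop :=
  (∀ i, 0 < A i) ∧ (1 : ℚ) / (g : ℚ) = ∑ i, (1 : ℚ) / (A i : ℚ)

/-!
Let `R_k = 1/g - 1/α₁ - ⋯ - 1/α_k`. If `R_k/e ≤ 1/α_k`, then `1/α₁, …, 1/α_k` followed by `e`
copies of `R_k/e` is decreasing and, by Curtiss' theorem, majorized by its Sylvester analogue, so
its product is at least the Sylvester one: `g α₁⋯α_k ≤ t_{k+1}^{e+1} R_k^e`. If `1/α_k` is smaller
than `R_k/e`, put it back into the remainder and induct with `e + 1`. For `e = 1` this gives either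
`g α₁⋯α_k ≤ t_{k+1}² R_k` or `g α₁⋯α_k ≤ (16/3) t_k³ R_k`. Take `k = n - 3`: the last three terms
satisfy `α_{n-2} α_{n-1} α_n R_k ≤ 3 lcm²`, since each product of two of them is at most `lcm²`. The
two resulting bounds on `g F_{n-2}` are `3 t²(t+1)²` and `16 t³` with `t = t_k`, and they differ by
`t² (3t - 1)(t - 3)`: the cases `t < 3` are the exceptions, and `t = 3` gives `(12,12,12,12)`.
-/

section AMGM

variable {ι : Type*} {s : Finset ι} {w : ι → ℝ} {v : ℝ} {e : ℕ}

lemma prod_le_exp_sum_sub_one (hw : ∀ i ∈ s, 0 ≤ w i) :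
    ∏ i ∈ s, w i ≤ Real.exp (∑ i ∈ s, (w i - 1)) := by
  rw [Real.exp_sum]
  exact prod_le_prod hw fun i _ ↦ by linarith [Real.add_one_le_exp (w i - 1)]

lemma prod_lt_exp_sum_sub_one (hw : ∀ i ∈ s, 0 < w i) (hne : ∃ i ∈ s, w i ≠ 1) :
    ∏ i ∈ s, w i < Real.exp (∑ i ∈ s, (w i - 1)) := by
  obtain ⟨i, hi, hne⟩ := hne
  rw [Real.exp_sum]
  exact prod_lt_prod hw (fun i _ ↦ by linarith [Real.add_one_le_exp (w i - 1)])
    ⟨i, hi, by linarith [Real.add_one_lt_exp (sub_ne_zero.2 hne)]⟩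

lemma pow_le_exp_mul_sub_one (hv : 0 ≤ v) (e : ℕ) : v ^ e ≤ Real.exp (e * (v - 1)) := by
  rw [Real.exp_nat_mul]
  gcongr
  linarith [Real.add_one_le_exp (v - 1)]

lemma prod_mul_pow_le_one (hw : ∀ i ∈ s, 0 ≤ w i) (hv : 0 ≤ v)
    (hsum : ∑ i ∈ s, (w i - 1) + e * (v - 1) ≤ 0) : (∏ i ∈ s, w i) * v ^ e ≤ 1 :=
  calc (∏ i ∈ s, w i) * v ^ e
      ≤ Real.exp (∑ i ∈ s, (w i - 1)) * Real.exp (e * (v - 1)) := by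
        gcongr
        exacts [prod_le_exp_sum_sub_one hw, pow_le_exp_mul_sub_one hv e]
    _ = Real.exp (∑ i ∈ s, (w i - 1) + e * (v - 1)) := (Real.exp_add _ _).symm
    _ ≤ 1 := Real.exp_le_one_iff.2 hsum

lemma prod_mul_pow_lt_one (hw : ∀ i ∈ s, 0 < w i) (hne : ∃ i ∈ s, w i ≠ 1) (hv : 0 < v)
    (hsum : ∑ i ∈ s, (w i - 1) + e * (v - 1) ≤ 0) : (∏ i ∈ s, w i) * v ^ e < 1 :=
  calc (∏ i ∈ s, w i) * v ^ e
      < Real.exp (∑ i ∈ s, (w i - 1)) * v ^ e := by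
        gcongr
        exact prod_lt_exp_sum_sub_one hw hne
    _ ≤ Real.exp (∑ i ∈ s, (w i - 1)) * Real.exp (e * (v - 1)) := by
        gcongr
        exact pow_le_exp_mul_sub_one hv.le e
    _ = Real.exp (∑ i ∈ s, (w i - 1) + e * (v - 1)) := (Real.exp_add _ _).symm
    _ ≤ 1 := Real.exp_le_one_iff.2 hsum

end AMGM

section Majorization

variable {k e : ℕ} {y z : ℕ → ℝ} {r t : ℝ}

-- Abel summation, with the partial sums of `z - y` tested against the monotone weights `1 / y i`.
lemma sum_div_sub_one_le (hy : Antitone y) (hr : 0 < r) (hry : ∀ i < k, r ≤ y i)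
    (hpre : ∀ j ≤ k, ∑ i ∈ range j, y i ≤ ∑ i ∈ range j, z i) :
    ∑ i ∈ range k, (z i / y i - 1) ≤ (∑ i ∈ range k, z i - ∑ i ∈ range k, y i) / r := by
  induction k generalizing r with
  | zero => simp
  | succ k ih =>
    have hyk : 0 < y k := hr.trans_le (hry k k.lt_succ_self)
    calc ∑ i ∈ range (k + 1), (z i / y i - 1)
        ≤ (∑ i ∈ range k, z i - ∑ i ∈ range k, y i) / y k + (z k / y k - 1) := by
          rw [sum_range_succ]
          gcongr
          exact ih hyk (fun i hi ↦ hy hi.le) fun j hj ↦ hpre j (hj.trans k.le_succ)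
      _ = (∑ i ∈ range (k + 1), z i - ∑ i ∈ range (k + 1), y i) / y k := by
          rw [sum_range_succ, sum_range_succ]
          field_simp
          ring
      _ ≤ (∑ i ∈ range (k + 1), z i - ∑ i ∈ range (k + 1), y i) / r :=
          div_le_div_of_nonneg_left (sub_nonneg.2 (hpre _ le_rfl)) hr (hry k k.lt_succ_self)

lemma sum_div_sub_one_add_le_zero (hy : Antitone y) (hr : 0 < r) (hry : ∀ i < k, r ≤ y i)
    (hpre : ∀ j ≤ k, ∑ i ∈ range j, y i ≤ ∑ i ∈ range j, z i)
    (htot : ∑ i ∈ range k, z i + e * t ≤ ∑ i ∈ range k, y i + e * r) :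
    ∑ i ∈ range k, (z i / y i - 1) + e * (t / r - 1) ≤ 0 :=
  calc ∑ i ∈ range k, (z i / y i - 1) + e * (t / r - 1)
      ≤ (∑ i ∈ range k, z i - ∑ i ∈ range k, y i) / r + e * (t / r - 1) := by
        gcongr
        exact sum_div_sub_one_le hy hr hry hpre
    _ = (∑ i ∈ range k, z i + e * t - (∑ i ∈ range k, y i + e * r)) / r := by
        field_simp
        ring
    _ ≤ 0 := div_nonpos_of_nonpos_of_nonneg (sub_nonpos.2 htot) hr.le

lemma prod_mul_pow_le_prod_mul_pow (hy : Antitone y) (hr : 0 < r) (hry : ∀ i < k, r ≤ y i)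
    (hz : ∀ i < k, 0 ≤ z i) (ht : 0 ≤ t)
    (hpre : ∀ j ≤ k, ∑ i ∈ range j, y i ≤ ∑ i ∈ range j, z i)
    (htot : ∑ i ∈ range k, z i + e * t ≤ ∑ i ∈ range k, y i + e * r) :
    (∏ i ∈ range k, z i) * t ^ e ≤ (∏ i ∈ range k, y i) * r ^ e := by
  have hypos : ∀ i ∈ range k, 0 < y i := fun i hi ↦ hr.trans_le (hry i (mem_range.1 hi))
  have hratio : (∏ i ∈ range k, z i / y i) * (t / r) ^ e ≤ 1 :=
    prod_mul_pow_le_one (fun i hi ↦ div_nonneg (hz i (mem_range.1 hi)) (hypos i hi).le)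
      (by positivity) (sum_div_sub_one_add_le_zero hy hr hry hpre htot)
  rwa [prod_div_distrib, div_pow, div_mul_div_comm,
    div_le_one (mul_pos (prod_pos hypos) (by positivity))] at hratio

lemma eq_of_prod_mul_pow_eq_prod_mul_pow (hy : Antitone y) (hr : 0 < r)
    (hry : ∀ i < k, r ≤ y i) (hz : ∀ i < k, 0 < z i) (ht : 0 < t)
    (hpre : ∀ j ≤ k, ∑ i ∈ range j, y i ≤ ∑ i ∈ range j, z i)
    (htot : ∑ i ∈ range k, z i + e * t ≤ ∑ i ∈ range k, y i + e * r)
    (heq : (∏ i ∈ range k, z i) * t ^ e = (∏ i ∈ range k, y i) * r ^ e) :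
    ∀ i < k, z i = y i := by
  have hypos : ∀ i ∈ range k, 0 < y i := fun i hi ↦ hr.trans_le (hry i (mem_range.1 hi))
  by_contra! ⟨i, hik, hne⟩
  have hi : i ∈ range k := mem_range.2 hik
  have hratio : (∏ i ∈ range k, z i / y i) * (t / r) ^ e < 1 :=
    prod_mul_pow_lt_one (fun j hj ↦ div_pos (hz j (mem_range.1 hj)) (hypos j hj))
      ⟨i, hi, mt (div_eq_one_iff_eq (hypos i hi).ne').1 hne⟩
      (by positivity) (sum_div_sub_one_add_le_zero hy hr hry hpre htot)
  rw [prod_div_distrib, div_pow, div_mul_div_comm,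
    div_lt_one (mul_pos (prod_pos hypos) (by positivity))] at hratio
  exact hratio.ne heq

end Majorization

section Elementary

lemma pow_mul_add_pow_succ_le {x y c : ℝ} {e : ℕ} (hy : 0 < y) (hx : 0 < x) (hex : e * y ≤ x)
    (hxc : x ≤ c * y) : c ^ e * (x + y) ^ (e + 1) ≤ (c + 1) ^ (e + 1) * (y * x ^ e) := by
  have hc : 0 < c := pos_of_mul_pos_left (hx.trans_le hxc) hy.le
  -- `q` is `x / (x + y)` rescaled to be `1` in the equality case `x = c * y`
  set q : ℝ := (c + 1) * x / (c * (x + y)) with hq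
  have hbern : 1 + e * (q - 1) ≤ q ^ e := by
    have h := one_add_mul_le_pow (a := q - 1) (by linarith [show 0 < q by positivity]) e
    rwa [add_sub_cancel] at h
  have hq1 : e * ((c + 1) * y) * (1 - q) ≤ c * y - x := by
    have h1 : 1 - q = (c * y - x) / (c * (x + y)) := by
      rw [hq]
      field_simp
      ring
    rw [h1, mul_div_assoc', div_le_iff₀ (by positivity), mul_comm]
    refine mul_le_mul_of_nonneg_left ?_ (sub_nonneg.2 hxc)
    linarith [mul_le_mul_of_nonneg_left hex hc.le]
  have hlin : x + y ≤ (c + 1) * y * q ^ e := by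
    nlinarith [mul_le_mul_of_nonneg_left hbern (show 0 ≤ (c + 1) * y by positivity)]
  have hqe : (c + 1) ^ e * x ^ e = q ^ e * (c * (x + y)) ^ e := by
    rw [← mul_pow, ← mul_pow, hq, div_mul_cancel₀ _ (by positivity)]
  calc c ^ e * (x + y) ^ (e + 1) = (c * (x + y)) ^ e * (x + y) := by rw [mul_pow]; ring
    _ ≤ (c * (x + y)) ^ e * ((c + 1) * y * q ^ e) := by gcongr
    _ = (c + 1) * y * ((c + 1) ^ e * x ^ e) := by rw [hqe]; ring
    _ = (c + 1) ^ (e + 1) * (y * x ^ e) := by ring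

lemma five_pow_mul_add_three_lt {e : ℕ} (he : 2 ≤ e) : 5 ^ e * (e + 3) < 2 * 8 ^ e := by
  induction e, he using Nat.le_induction with
  | base => norm_num
  | succ e he ih =>
    calc 5 ^ (e + 1) * (e + 1 + 3) = 5 ^ e * (5 * (e + 4)) := by ring
      _ ≤ 5 ^ e * (8 * (e + 3)) := by gcongr 5 ^ e * ?_; omega
      _ = 8 * (5 ^ e * (e + 3)) := by ring
      _ < 8 * (2 * 8 ^ e) := by gcongr
      _ = 2 * 8 ^ (e + 1) := by ring

lemma add_three_pow_succ_lt {e : ℕ} (he : 2 ≤ e) :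
    (e + 3) ^ (e + 1) < (e + 2) ^ e * 2 ^ (e + 1) := by
  refine lt_of_mul_lt_mul_left (a := 8 ^ e) ?_ (Nat.zero_le _)
  calc 8 ^ e * (e + 3) ^ (e + 1) = (8 * (e + 3)) ^ e * (e + 3) := by rw [mul_pow]; ring
    _ ≤ (5 * (2 * (e + 2))) ^ e * (e + 3) := by gcongr ?_ ^ e * _; omega
    _ = (2 * (e + 2)) ^ e * (5 ^ e * (e + 3)) := by rw [mul_pow 5]; ring
    _ < (2 * (e + 2)) ^ e * (2 * 8 ^ e) :=
      Nat.mul_lt_mul_of_pos_left (five_pow_mul_add_three_lt he) (by positivity)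
    _ = 8 ^ e * ((e + 2) ^ e * 2 ^ (e + 1)) := by rw [mul_pow]; ring

lemma two_pow_succ_mul_le {e t : ℕ} (he : 1 ≤ e) (ht : 1 ≤ t) :
    2 ^ (e + 1) * t ≤ (t + 1) ^ (e + 1) := by
  induction e, he using Nat.le_induction with
  | base => simpa using four_mul_le_sq_add t 1
  | succ e _ ih =>
    calc 2 ^ (e + 1 + 1) * t = 2 ^ (e + 1) * t * 2 := by ring
      _ ≤ (t + 1) ^ (e + 1) * (t + 1) := by gcongr; omega
      _ = (t + 1) ^ (e + 1 + 1) := by ring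

lemma add_three_pow_succ_mul_lt {e t : ℕ} (he : 2 ≤ e) (ht : 1 ≤ t) :
    (e + 3) ^ (e + 1) * t < (e + 2) ^ e * (t + 1) ^ (e + 1) :=
  calc (e + 3) ^ (e + 1) * t < (e + 2) ^ e * 2 ^ (e + 1) * t := by
        gcongr
        exact add_three_pow_succ_lt he
    _ = (e + 2) ^ e * (2 ^ (e + 1) * t) := mul_assoc _ _ _
    _ ≤ (e + 2) ^ e * (t + 1) ^ (e + 1) := by
        gcongr
        exact two_pow_succ_mul_le (by omega) ht

lemma three_mul_sq_lt {t : ℕ} (h0 : 0 < t) (h3 : t < 3) : 3 * (t * (t + 1)) ^ 2 < 16 * t ^ 3 := by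
  interval_cases t <;> norm_num

lemma sixteen_mul_lt {t : ℕ} (h : 3 < t) : 16 * t ^ 3 < 3 * (t * (t + 1)) ^ 2 :=
  calc 16 * t ^ 3 = t ^ 2 * (16 * t) := by ring
    _ < t ^ 2 * (3 * (t + 1) ^ 2) := by
      gcongr t ^ 2 * ?_
      nlinarith
    _ = 3 * (t * (t + 1)) ^ 2 := by ring

end Elementary

section Harmonic

variable {ι : Type*} {s : Finset ι} {x : ι → ℝ} {L : ℝ}

lemma prod_mul_sum_one_div [DecidableEq ι] (hx : ∀ i ∈ s, x i ≠ 0) :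
    (∏ i ∈ s, x i) * ∑ i ∈ s, 1 / x i = ∑ i ∈ s, ∏ j ∈ s.erase i, x j := by
  rw [mul_sum]
  refine sum_congr rfl fun i hi ↦ ?_
  rw [← mul_prod_erase s x hi]
  field_simp [hx i hi]

lemma prod_erase_le_pow [DecidableEq ι] (hx : ∀ i ∈ s, 0 < x i) (hL : ∀ i ∈ s, x i ≤ L) {i : ι}
    (hi : i ∈ s) : ∏ j ∈ s.erase i, x j ≤ L ^ (#s - 1) := by
  rw [← card_erase_of_mem hi, ← prod_const]
  exact prod_le_prod (fun j hj ↦ (hx j (mem_of_mem_erase hj)).le)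
    fun j hj ↦ hL j (mem_of_mem_erase hj)

lemma prod_mul_sum_one_div_le (hx : ∀ i ∈ s, 0 < x i) (hL : ∀ i ∈ s, x i ≤ L) :
    (∏ i ∈ s, x i) * ∑ i ∈ s, 1 / x i ≤ #s * L ^ (#s - 1) := by
  classical
  rw [prod_mul_sum_one_div fun i hi ↦ (hx i hi).ne', ← nsmul_eq_mul]
  exact sum_le_card_nsmul _ _ _ fun i hi ↦ prod_erase_le_pow hx hL hi

lemma eq_of_prod_mul_sum_one_div_eq (hs : 1 < #s) (hx : ∀ i ∈ s, 0 < x i)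
    (hL : ∀ i ∈ s, x i ≤ L)
    (heq : (∏ i ∈ s, x i) * ∑ i ∈ s, 1 / x i = #s * L ^ (#s - 1)) : ∀ i ∈ s, x i = L := by
  classical
  by_contra! ⟨j, hj, hne⟩
  obtain ⟨i, hi, hij⟩ := exists_mem_ne hs j
  refine heq.not_lt ?_
  rw [prod_mul_sum_one_div fun i hi ↦ (hx i hi).ne', ← nsmul_eq_mul, ← sum_const]
  refine sum_lt_sum (fun i hi ↦ prod_erase_le_pow hx hL hi) ⟨i, hi, ?_⟩
  rw [← card_erase_of_mem hi, ← prod_const]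
  exact prod_lt_prod (fun k hk ↦ hx k (mem_of_mem_erase hk))
    (fun k hk ↦ hL k (mem_of_mem_erase hk))
    ⟨j, mem_erase.2 ⟨hij.symm, hj⟩, (hL j hj).lt_of_ne hne⟩

end Harmonic

section Sylvester

variable {g k : ℕ}

lemma tsylv_one (g : ℕ) : tsylv g 1 = g := rfl

lemma sylv_succ (g k : ℕ) : sylv g (k + 1) = tsylv g (k + 1) + 1 := by
  cases k <;> rfl

lemma tsylv_succ_succ (g k : ℕ) :
    tsylv g (k + 2) = tsylv g (k + 1) * (tsylv g (k + 1) + 1) := by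
  rw [← sylv_succ, mul_comm]
  rfl

lemma tsylv_pos (hg : 0 < g) (k : ℕ) : 0 < tsylv g (k + 1) := by
  induction k with
  | zero => exact hg
  | succ k ih =>
    rw [tsylv_succ_succ]
    positivity

lemma sylv_pos (g k : ℕ) : 0 < sylv g (k + 1) := by
  rw [sylv_succ]
  omega

lemma sylv_dvd_tsylv {i k : ℕ} (h : i < k) : sylv g (i + 1) ∣ tsylv g (k + 1) := by
  induction k, h using Nat.le_induction with
  | base => exact sylv_succ g i ▸ tsylv_succ_succ g i ▸ dvd_mul_left _ _
  | succ k _ ih => exact tsylv_succ_succ g k ▸ ih.mul_right _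

lemma mul_prod_sylv (g k : ℕ) : g * ∏ i ∈ range k, sylv g (i + 1) = tsylv g (k + 1) := by
  induction k with
  | zero => simp [tsylv_one]
  | succ k ih => rw [prod_range_succ, ← mul_assoc, ih, tsylv_succ_succ, sylv_succ]

lemma six_le_tsylv (hg : 0 < g) (k : ℕ) : 6 ≤ tsylv g (k + 3) := by
  have h2 : 2 ≤ tsylv g (k + 2) := by
    rw [tsylv_succ_succ]
    nlinarith [tsylv_pos hg k]
  rw [tsylv_succ_succ]
  nlinarith

lemma tsylv_succ_eq_three_iff : tsylv g (k + 1) = 3 ↔ k = 0 ∧ g = 3 := by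
  rcases k with _ | k
  · rw [tsylv_one, eq_self_iff_true, true_and]
  · refine iff_of_false (fun h ↦ ?_) (by omega)
    have heven := Nat.even_mul_succ_self (tsylv g (k + 1))
    rw [← tsylv_succ_succ, h] at heven
    exact absurd heven (by decide)

lemma three_le_tsylv_succ (hg : 0 < g) (h0 : ¬(k = 0 ∧ (g = 1 ∨ g = 2))) (h1 : ¬(k = 1 ∧ g = 1)) :
    3 ≤ tsylv g (k + 1) := by
  match k with
  | 0 =>
    rw [tsylv_one]
    omega
  | 1 =>
    rw [tsylv_succ_succ, tsylv_one]
    nlinarith [show 2 ≤ g by omega]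
  | k + 2 => linarith [six_le_tsylv hg k]

end Sylvester

section Remainder

variable {g : ℕ} {a : ℕ → ℕ} {k : ℕ}

/-- The remainder `1/g - 1/a₀ - ⋯ - 1/aₖ₋₁`. -/
noncomputable def remainder (g : ℕ) (a : ℕ → ℕ) (k : ℕ) : ℝ :=
  1 / g - ∑ i ∈ range k, 1 / (a i : ℝ)

lemma antitone_one_div (ha : ∀ i, 0 < a i) (hm : Monotone a) : Antitone fun i ↦ 1 / (a i : ℝ) :=
  fun i _ hij ↦ one_div_le_one_div_of_le (mod_cast ha i) (mod_cast hm hij)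

lemma remainder_zero (g : ℕ) (a : ℕ → ℕ) : remainder g a 0 = 1 / g := by
  simp [remainder]

lemma remainder_succ (g : ℕ) (a : ℕ → ℕ) (k : ℕ) :
    remainder g a (k + 1) = remainder g a k - 1 / a k := by
  rw [remainder, sum_range_succ, ← sub_sub, ← remainder]

lemma remainder_eq_sum_Ico {N : ℕ} (h : remainder g a (k + N) = 0) :
    remainder g a k = ∑ i ∈ Ico k (k + N), 1 / (a i : ℝ) := by
  rw [remainder, ← sum_range_add_sum_Ico _ (Nat.le_add_right k N), ← sub_sub, sub_eq_zero] at h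
  exact h

lemma remainder_pos {N : ℕ} (hN : 0 < N) (h : remainder g a (k + N) = 0) (ha : ∀ i, 0 < a i) :
    0 < remainder g a k := by
  rw [remainder_eq_sum_Ico h]
  exact sum_pos (fun i _ ↦ one_div_pos.2 (mod_cast ha i)) (nonempty_Ico.2 (by omega))

lemma remainder_le_mul_one_div {N j : ℕ} (h : remainder g a (k + N) = 0) (ha : ∀ i, 0 < a i)
    (hm : Monotone a) (hj : j ≤ k) : remainder g a k ≤ N * (1 / a j) :=
  calc remainder g a k = ∑ i ∈ Ico k (k + N), 1 / (a i : ℝ) := remainder_eq_sum_Ico h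
    _ ≤ #(Ico k (k + N)) • (1 / (a j : ℝ)) := sum_le_card_nsmul _ _ _ fun _ hi ↦
        antitone_one_div ha hm (hj.trans (mem_Ico.1 hi).1)
    _ = N * (1 / a j) := by rw [Nat.card_Ico, Nat.add_sub_cancel_left, nsmul_eq_mul]

lemma remainder_congr {b : ℕ → ℕ} (h : ∀ i < k, a i = b i) :
    remainder g a k = remainder g b k := by
  rw [remainder, sum_congr rfl fun i hi ↦ by rw [h i (mem_range.1 hi)], ← remainder]

lemma antitone_remainder (g : ℕ) (a : ℕ → ℕ) : Antitone (remainder g a) :=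
  antitone_nat_of_succ_le fun k ↦ by
    rw [remainder_succ]
    exact sub_le_self _ (by positivity)

lemma remainder_sylv (hg : 0 < g) (k : ℕ) :
    remainder g (fun i ↦ sylv g (i + 1)) k = 1 / tsylv g (k + 1) := by
  induction k with
  | zero => rw [remainder_zero, tsylv_one]
  | succ k ih =>
    have ht : (0 : ℝ) < tsylv g (k + 1) := mod_cast tsylv_pos hg k
    rw [remainder_succ, ih, tsylv_succ_succ, sylv_succ]
    push_cast
    field_simp
    ring

lemma exists_int_remainder_mul_prod (hg : 0 < g) (ha : ∀ i, 0 < a i) (k : ℕ) :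
    ∃ u : ℤ, remainder g a k * (g * ∏ i ∈ range k, a i : ℕ) = u := by
  induction k with
  | zero => exact ⟨1, by simp [remainder_zero, hg.ne']⟩
  | succ k ih =>
    obtain ⟨u, hu⟩ := ih
    have hak : (a k : ℝ) ≠ 0 := mod_cast (ha k).ne'
    refine ⟨u * a k - g * ∏ i ∈ range k, (a i : ℤ), ?_⟩
    rw [remainder_succ, prod_range_succ]
    push_cast at hu ⊢
    rw [← hu]
    field_simp

lemma one_le_remainder_mul_prod (hg : 0 < g) (ha : ∀ i, 0 < a i) (hr : 0 < remainder g a k) :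
    1 ≤ remainder g a k * (g * ∏ i ∈ range k, a i : ℕ) := by
  obtain ⟨u, hu⟩ := exists_int_remainder_mul_prod hg ha k
  have hP : 0 < g * ∏ i ∈ range k, a i := Nat.mul_pos hg (prod_pos fun i _ ↦ ha i)
  have hu0 : (0 : ℝ) < u := hu ▸ mul_pos hr (mod_cast hP)
  rw [hu]
  exact_mod_cast Int.add_one_le_of_lt (show 0 < u by exact_mod_cast hu0)

lemma sum_one_div_sylv (hg : 0 < g) (k : ℕ) :
    ∑ i ∈ range k, 1 / (sylv g (i + 1) : ℝ) = 1 / g - 1 / tsylv g (k + 1) := by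
  rw [← remainder_sylv hg, remainder, sub_sub_cancel]

lemma sum_one_div_eq_sub_remainder (g : ℕ) (a : ℕ → ℕ) (k : ℕ) :
    ∑ i ∈ range k, 1 / (a i : ℝ) = 1 / g - remainder g a k := by
  rw [remainder, sub_sub_cancel]

end Remainder

section SylvesterMajorization

variable {g : ℕ} {a : ℕ → ℕ} {k e : ℕ} {r t : ℝ}

lemma sum_one_div_le_sum_one_div_sylv (hg : 0 < g)
    (h : 1 / (tsylv g (k + 1) : ℝ) ≤ remainder g a k) :
    ∑ i ∈ range k, 1 / (a i : ℝ) ≤ ∑ i ∈ range k, 1 / (sylv g (i + 1) : ℝ) := by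
  rw [sum_one_div_sylv hg, sum_one_div_eq_sub_remainder g]
  exact sub_le_sub_left h _

lemma prod_one_div (hg : 0 < g) (a : ℕ → ℕ) (k : ℕ) :
    ∏ i ∈ range k, 1 / (a i : ℝ) = g / (g * ∏ i ∈ range k, a i : ℕ) := by
  have hg' : (g : ℝ) ≠ 0 := mod_cast hg.ne'
  rw [prod_div_distrib, prod_const_one, Nat.cast_mul, Nat.cast_prod, div_mul_cancel_left₀ hg',
    one_div]

lemma mul_prod_mul_pow_le (hg : 0 < g) (ha : ∀ i, 0 < a i) (hm : Monotone a) (hr : 0 < r)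
    (ht : 0 ≤ t) (hra : ∀ i < k, r ≤ 1 / a i)
    (hpre : ∀ j ≤ k, 1 / (tsylv g (j + 1) : ℝ) ≤ remainder g a j)
    (htot : remainder g a k + e * t ≤ 1 / tsylv g (k + 1) + e * r) :
    (g * ∏ i ∈ range k, a i : ℕ) * t ^ e ≤ tsylv g (k + 1) * r ^ e := by
  have hprod := prod_mul_pow_le_prod_mul_pow (e := e) (antitone_one_div ha hm) hr hra
    (fun i _ ↦ by positivity) ht (fun j hj ↦ sum_one_div_le_sum_one_div_sylv hg (hpre j hj))
    (by rw [sum_one_div_sylv hg, sum_one_div_eq_sub_remainder g]; linarith)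
  have hP : 0 < g * ∏ i ∈ range k, a i := Nat.mul_pos hg (prod_pos fun i _ ↦ ha i)
  rw [prod_one_div hg, prod_one_div hg _ k, mul_prod_sylv, div_mul_eq_mul_div, div_mul_eq_mul_div,
    div_le_div_iff₀ (mod_cast tsylv_pos hg k) (mod_cast hP), mul_assoc, mul_assoc] at hprod
  linarith [le_of_mul_le_mul_left hprod (mod_cast hg)]

lemma eq_sylv_of_mul_prod_mul_pow_eq (hg : 0 < g) (ha : ∀ i, 0 < a i) (hm : Monotone a)
    (hr : 0 < r) (ht : 0 < t) (hra : ∀ i < k, r ≤ 1 / a i)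
    (hpre : ∀ j ≤ k, 1 / (tsylv g (j + 1) : ℝ) ≤ remainder g a j)
    (htot : remainder g a k + e * t ≤ 1 / tsylv g (k + 1) + e * r)
    (heq : (g * ∏ i ∈ range k, a i : ℕ) * t ^ e = tsylv g (k + 1) * r ^ e) :
    ∀ i < k, a i = sylv g (i + 1) := by
  have hP : 0 < g * ∏ i ∈ range k, a i := Nat.mul_pos hg (prod_pos fun i _ ↦ ha i)
  have hinv := eq_of_prod_mul_pow_eq_prod_mul_pow (e := e) (antitone_one_div ha hm) hr hra
    (z := fun i ↦ 1 / (sylv g (i + 1) : ℝ)) (fun i _ ↦ one_div_pos.2 (mod_cast sylv_pos g i)) ht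
    (fun j hj ↦ sum_one_div_le_sum_one_div_sylv hg (hpre j hj))
    (by rw [sum_one_div_sylv hg, sum_one_div_eq_sub_remainder g]; linarith)
    (by
      rw [prod_one_div hg, prod_one_div hg _ k, mul_prod_sylv, div_mul_eq_mul_div,
        div_mul_eq_mul_div, div_eq_div_iff (mod_cast (tsylv_pos hg k).ne') (mod_cast hP.ne')]
      linear_combination (g : ℝ) * heq)
  intro i hi
  exact_mod_cast (eq_of_one_div_eq_one_div (hinv i hi)).symm

/-- Curtiss' theorem. -/
theorem one_div_tsylv_le_remainder (hg : 0 < g) (ha : ∀ i, 0 < a i) (hm : Monotone a)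
    (hr : 0 < remainder g a k) : 1 / (tsylv g (k + 1) : ℝ) ≤ remainder g a k := by
  induction k using Nat.strong_induction_on with
  | _ k ih =>
  rcases k with _ | k
  · rw [remainder_zero, tsylv_one]
  by_contra! hlt
  have hs := sylv_pos g k
  have hle := mul_prod_mul_pow_le (e := 1) (k := k) hg ha hm (one_div_pos.2 (mod_cast ha k))
    (t := 1 / (sylv g (k + 1) : ℝ)) (by positivity) (fun i hi ↦ antitone_one_div ha hm hi.le)
    (fun j hj ↦ ih j (by omega) (hr.trans_le (antitone_remainder g a (by omega))))
    (by
      rw [← remainder_sylv hg, remainder_succ, remainder_succ, remainder_sylv hg] at hlt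
      rw [Nat.cast_one]
      linarith)
  rw [pow_one, pow_one, mul_one_div, mul_one_div,
    div_le_div_iff₀ (mod_cast hs) (mod_cast ha k)] at hle
  have hP : g * ∏ i ∈ range (k + 1), a i ≤ tsylv g (k + 2) := by
    rw [prod_range_succ, ← mul_assoc, tsylv_succ_succ, ← sylv_succ]
    exact_mod_cast hle
  refine (one_le_remainder_mul_prod hg ha hr).not_gt ?_
  rw [lt_div_iff₀ (mod_cast tsylv_pos hg _)] at hlt
  refine lt_of_le_of_lt ?_ hlt
  gcongr

end SylvesterMajorization

section ProductBound

variable {g : ℕ} {a : ℕ → ℕ} {k e : ℕ}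

lemma mul_prod_le_of_remainder_le (hg : 0 < g) (ha : ∀ i, 0 < a i) (hm : Monotone a) (he : 0 < e)
    (hR : 0 < remainder g a k) (hRa : ∀ i < k, remainder g a k ≤ e * (1 / a i)) :
    (g * ∏ i ∈ range k, a i : ℕ) ≤ (tsylv g (k + 1) : ℝ) ^ (e + 1) * remainder g a k ^ e ∧
      ((g * ∏ i ∈ range k, a i : ℕ) = (tsylv g (k + 1) : ℝ) ^ (e + 1) * remainder g a k ^ e →
        ∀ i < k, a i = sylv g (i + 1)) := by
  have he' : (0 : ℝ) < e := mod_cast he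
  have hτ : (0 : ℝ) < tsylv g (k + 1) := mod_cast tsylv_pos hg k
  set R := remainder g a k
  set t : ℝ := 1 / (e * tsylv g (k + 1)) with ht
  have htpos : 0 < t := by positivity
  have hra : ∀ i < k, R / e ≤ 1 / a i := fun i hi ↦ (div_le_iff₀' he').2 (hRa i hi)
  have hpre : ∀ j ≤ k, 1 / (tsylv g (j + 1) : ℝ) ≤ remainder g a j := fun j hj ↦
    one_div_tsylv_le_remainder hg ha hm (hR.trans_le (antitone_remainder g a hj))
  have htot : R + e * t ≤ 1 / tsylv g (k + 1) + e * (R / e) := by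
    rw [ht]
    field_simp
    linarith
  have hscale : tsylv g (k + 1) * (R / e) ^ e =
      (tsylv g (k + 1) : ℝ) ^ (e + 1) * R ^ e * t ^ e := by
    rw [ht, div_pow, one_div, inv_pow, mul_pow]
    field_simp
    ring
  constructor
  · have hle := mul_prod_mul_pow_le hg ha hm (div_pos hR he') htpos.le hra hpre htot
    exact le_of_mul_le_mul_right (hscale ▸ hle) (pow_pos htpos e)
  · intro heq
    exact eq_sylv_of_mul_prod_mul_pow_eq hg ha hm (div_pos hR he') htpos hra hpre htot
      (by rw [heq, hscale])

lemma mul_prod_succ_mul_one_div (ha : 0 < a k) :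
    (g * ∏ i ∈ range (k + 1), a i : ℕ) * (1 / a k : ℝ) = (g * ∏ i ∈ range k, a i : ℕ) := by
  have hak : (a k : ℝ) ≠ 0 := mod_cast ha.ne'
  rw [prod_range_succ]
  push_cast
  field_simp

lemma mul_one_div_le (ha : ∀ i, 0 < a i) (hm : Monotone a) {c x : ℝ} (hc : 0 ≤ c)
    (hx : x ≤ c * (1 / a k)) : ∀ i ≤ k, x ≤ c * (1 / a i) := fun _ hi ↦
  hx.trans (mul_le_mul_of_nonneg_left (antitone_one_div ha hm hi) hc)

lemma mul_prod_succ_le {t : ℝ} (ha : 0 < a k) (ht : 0 ≤ t) (hR : 0 < remainder g a (k + 1))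
    (hlow : e * (1 / a k : ℝ) ≤ remainder g a (k + 1))
    (hupp : remainder g a (k + 1) ≤ (e + 2) * (1 / a k))
    (hP : (g * ∏ i ∈ range k, a i : ℕ) ≤ t * remainder g a k ^ (e + 1)) :
    (e + 2) ^ e * (g * ∏ i ∈ range (k + 1), a i : ℕ) ≤
      (e + 3) ^ (e + 1) * t * remainder g a (k + 1) ^ e := by
  have hak : (0 : ℝ) < 1 / a k := one_div_pos.2 (mod_cast ha)
  have hstep := pow_mul_add_pow_succ_le hak hR hlow hupp
  rw [remainder_succ, sub_add_cancel, ← remainder_succ] at hstep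
  refine le_of_mul_le_mul_right ?_ hak
  rw [mul_assoc, mul_prod_succ_mul_one_div ha]
  calc ((e : ℝ) + 2) ^ e * (g * ∏ i ∈ range k, a i : ℕ)
      ≤ (e + 2) ^ e * (t * remainder g a k ^ (e + 1)) := by gcongr
    _ = t * ((e + 2) ^ e * remainder g a k ^ (e + 1)) := by ring
    _ ≤ t * ((e + 2 + 1) ^ (e + 1) * (1 / a k * remainder g a (k + 1) ^ e)) := by gcongr
    _ = (e + 3) ^ (e + 1) * t * remainder g a (k + 1) ^ e * (1 / a k) := by ring

theorem mul_prod_le_of_two_le (hg : 0 < g) (ha : ∀ i, 0 < a i) (hm : Monotone a) (he : 2 ≤ e)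
    (hR : 0 < remainder g a k) (hRa : ∀ i < k, remainder g a k ≤ (e + 2) * (1 / a i)) :
    (g * ∏ i ∈ range k, a i : ℕ) ≤ (tsylv g (k + 1) : ℝ) ^ (e + 1) * remainder g a k ^ e ∧
      ((g * ∏ i ∈ range k, a i : ℕ) = (tsylv g (k + 1) : ℝ) ^ (e + 1) * remainder g a k ^ e →
        ∀ i < k, a i = sylv g (i + 1)) := by
  induction k generalizing e with
  | zero => exact mul_prod_le_of_remainder_le hg ha hm (by omega) hR (by simp)
  | succ k ih =>
    by_cases hsorted : remainder g a (k + 1) ≤ e * (1 / a k)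
    · exact mul_prod_le_of_remainder_le hg ha hm (by omega) hR fun i hi ↦
        mul_one_div_le ha hm e.cast_nonneg hsorted i (Nat.le_of_lt_succ hi)
    -- otherwise `1 / a k < remainder / e`, so `a k` joins the `e` equal terms
    have hupp := hRa k k.lt_succ_self
    have hRk := (ih (e := e + 1) (by omega) (hR.trans_le (antitone_remainder g a k.le_succ))
      fun i hi ↦ mul_one_div_le ha hm (by positivity) (by
        rw [remainder_succ] at hupp
        push_cast
        linarith) i hi.le).1
    set t := tsylv g (k + 1)
    have hnum : ((e : ℝ) + 3) ^ (e + 1) * t < (e + 2) ^ e * (t + 1) ^ (e + 1) :=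
      mod_cast add_three_pow_succ_mul_lt he (tsylv_pos hg k)
    have ht : (0 : ℝ) < t := mod_cast tsylv_pos hg k
    have hlt : ((e : ℝ) + 2) ^ e * (g * ∏ i ∈ range (k + 1), a i : ℕ) <
        (e + 2) ^ e * ((tsylv g (k + 2) : ℝ) ^ (e + 1) * remainder g a (k + 1) ^ e) :=
      calc ((e : ℝ) + 2) ^ e * (g * ∏ i ∈ range (k + 1), a i : ℕ)
          ≤ (e + 3) ^ (e + 1) * t ^ (e + 2) * remainder g a (k + 1) ^ e :=
            mul_prod_succ_le (ha k) (by positivity) hR (not_le.1 hsorted).le hupp hRk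
        _ = (e + 3) ^ (e + 1) * t * (t ^ (e + 1) * remainder g a (k + 1) ^ e) := by ring
        _ < (e + 2) ^ e * (t + 1) ^ (e + 1) * (t ^ (e + 1) * remainder g a (k + 1) ^ e) := by gcongr
        _ = (e + 2) ^ e * ((tsylv g (k + 2) : ℝ) ^ (e + 1) * remainder g a (k + 1) ^ e) := by
            rw [tsylv_succ_succ, Nat.cast_mul, mul_pow]
            push_cast
            ring
    have hlt' := lt_of_mul_lt_mul_left hlt (by positivity)
    exact ⟨hlt'.le, fun heq ↦ absurd heq hlt'.ne⟩

theorem three_mul_mul_prod_succ_le (hg : 0 < g) (ha : ∀ i, 0 < a i) (hm : Monotone a)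
    (hlow : 1 / a k ≤ remainder g a (k + 1)) (hupp : remainder g a (k + 1) ≤ 3 * (1 / a k)) :
    3 * (g * ∏ i ∈ range (k + 1), a i : ℕ) ≤
      16 * (tsylv g (k + 1) : ℝ) ^ 3 * remainder g a (k + 1) ∧
    (3 * (g * ∏ i ∈ range (k + 1), a i : ℕ) =
      16 * (tsylv g (k + 1) : ℝ) ^ 3 * remainder g a (k + 1) →
      (∀ i < k, a i = sylv g (i + 1)) ∧ remainder g a (k + 1) = 3 * (1 / a k)) := by
  have hak : (0 : ℝ) < 1 / a k := one_div_pos.2 (mod_cast ha k)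
  have ht : (0 : ℝ) < tsylv g (k + 1) ^ 3 := pow_pos (mod_cast tsylv_pos hg k) 3
  have hRk : remainder g a k = remainder g a (k + 1) + 1 / a k := by
    rw [remainder_succ, sub_add_cancel]
  obtain ⟨hle, heq⟩ := mul_prod_le_of_two_le (e := 2) hg ha hm le_rfl
    (by linarith) fun i hi ↦ mul_one_div_le ha hm (by positivity) (by
      push_cast
      linarith) i hi.le
  rw [← mul_prod_succ_mul_one_div (ha k), hRk, two_add_one_eq_three] at hle heq
  have hRpos := hak.trans_le hlow
  generalize remainder g a (k + 1) = R at *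
  generalize ((g * ∏ i ∈ range (k + 1), a i : ℕ) : ℝ) = P at *
  generalize (1 / a k : ℝ) = y at *
  have hquad : 0 ≤ (3 * y - R) * (3 * R - y) := mul_nonneg (by linarith) (by linarith)
  refine ⟨le_of_mul_le_mul_right ?_ hak, fun h ↦ ?_⟩
  · linarith [mul_nonneg ht.le hquad]
  have hzero : (3 * y - R) * (3 * R - y) ≤ 0 := by
    refine nonpos_of_mul_nonpos_right ?_ ht
    linarith [mul_le_mul_of_nonneg_right h.ge hak.le]
  have hRy : R = 3 * y := by nlinarith
  refine ⟨heq ?_, hRy⟩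
  subst hRy
  linear_combination y / 3 * h

end ProductBound

section Tail

variable {g : ℕ} {a : ℕ → ℕ} {k N L : ℕ}

/-- The sequence `s_{g,1}, …, s_{g,k}, N t_{g,k+1}, N t_{g,k+1}, …`; its first `k + N` terms form
a unit fraction partition of `g`, and the extremal partitions are of this shape. -/
def sylvTail (g k N i : ℕ) : ℕ :=
  if i < k then sylv g (i + 1) else N * tsylv g (k + 1)

lemma sylvTail_of_lt {i : ℕ} (h : i < k) : sylvTail g k N i = sylv g (i + 1) := if_pos h

lemma sylvTail_of_le {i : ℕ} (h : k ≤ i) : sylvTail g k N i = N * tsylv g (k + 1) :=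
  if_neg h.not_gt

lemma sylvTail_one_one_four (i : ℕ) : sylvTail 1 1 4 i = if i = 0 then 2 else 8 := by
  cases i <;> rfl

lemma mul_prod_sylvTail (g k N : ℕ) :
    g * ∏ i : Fin (k + N), sylvTail g k N i = tsylv g (k + 1) * (N * tsylv g (k + 1)) ^ N := by
  rw [Fin.prod_univ_eq_prod_range (sylvTail g k N),
    ← prod_range_mul_prod_Ico _ (Nat.le_add_right k N), ← mul_assoc,
    prod_congr rfl fun i hi ↦ sylvTail_of_lt (mem_range.1 hi), mul_prod_sylv,
    prod_congr rfl fun i hi ↦ sylvTail_of_le (mem_Ico.1 hi).1, prod_const, Nat.card_Ico,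
    Nat.add_sub_cancel_left]

lemma lcm_sylvTail (g k : ℕ) (hN : 0 < N) :
    univ.lcm (fun i : Fin (k + N) ↦ sylvTail g k N i) = N * tsylv g (k + 1) := by
  refine dvd_antisymm (Finset.lcm_dvd fun i _ ↦ ?_) ?_
  · rcases lt_or_ge (i : ℕ) k with hi | hi
    · exact sylvTail_of_lt (g := g) hi ▸ (sylv_dvd_tsylv hi).mul_left N
    · rw [sylvTail_of_le hi]
  · have h := dvd_lcm (f := fun i : Fin (k + N) ↦ sylvTail g k N i)
      (mem_univ ⟨k, Nat.lt_add_of_pos_right hN⟩)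
    rwa [sylvTail_of_le le_rfl] at h

lemma eq_sylvTail (hg : 0 < g) (hL : 0 < L) (h0 : remainder g a (k + N) = 0)
    (hhead : ∀ i < k, a i = sylv g (i + 1)) (htail : ∀ i, k ≤ i → i < k + N → a i = L) :
    ∀ i < k + N, a i = sylvTail g k N i := by
  have hLN : (L : ℝ) = N * tsylv g (k + 1) := by
    have hsum : ∑ i ∈ Ico k (k + N), 1 / (a i : ℝ) = N * (1 / L) := by
      rw [sum_congr rfl fun i hi ↦ by rw [htail i (mem_Ico.1 hi).1 (mem_Ico.1 hi).2], sum_const,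
        Nat.card_Ico, Nat.add_sub_cancel_left, nsmul_eq_mul]
    have hR := remainder_eq_sum_Ico h0
    rw [remainder_congr hhead, remainder_sylv hg, hsum] at hR
    have ht : (0 : ℝ) < tsylv g (k + 1) := mod_cast tsylv_pos hg k
    field_simp [show (L : ℝ) ≠ 0 from mod_cast hL.ne'] at hR
    rw [hR, mul_comm]
  intro i hi
  rcases lt_or_ge i k with hik | hik
  · rw [sylvTail_of_lt hik, hhead i hik]
  · rw [sylvTail_of_le hik, htail i hik hi]
    exact_mod_cast hLN

end Tail

section ThreeTerms

variable {g : ℕ} {a : ℕ → ℕ} {m k N L : ℕ}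

lemma mul_le_of_le_mul {P Q R b c : ℝ} (hc : 0 < c) (hQ : 0 < Q) (hP : P ≤ c * R)
    (hQR : Q * R ≤ b) : P * Q ≤ c * b ∧ (P * Q = c * b → P = c * R ∧ Q * R = b) := by
  have hPQ : P * Q ≤ c * R * Q := by gcongr
  have hcb : c * (Q * R) ≤ c * b := by gcongr
  refine ⟨by linarith, fun h ↦ ⟨hP.antisymm ?_, hQR.antisymm ?_⟩⟩
  · exact le_of_mul_le_mul_right (by linarith) hQ
  · exact le_of_mul_le_mul_left (by linarith) hc

lemma prod_Ico_mul_remainder_le (ha : ∀ i, 0 < a i) (h0 : remainder g a (k + N) = 0)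
    (hL : ∀ i < k + N, a i ≤ L) :
    (∏ i ∈ Ico k (k + N), (a i : ℝ)) * remainder g a k ≤ N * (L : ℝ) ^ (N - 1) := by
  rw [remainder_eq_sum_Ico h0]
  simpa only [Nat.card_Ico, Nat.add_sub_cancel_left] using
    prod_mul_sum_one_div_le (s := Ico k (k + N)) (x := fun i ↦ (a i : ℝ))
      (fun i _ ↦ mod_cast ha i) fun i hi ↦ mod_cast hL i (mem_Ico.1 hi).2

lemma eq_of_prod_Ico_mul_remainder_eq (hN : 1 < N) (ha : ∀ i, 0 < a i)
    (h0 : remainder g a (k + N) = 0) (hL : ∀ i < k + N, a i ≤ L)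
    (heq : (∏ i ∈ Ico k (k + N), (a i : ℝ)) * remainder g a k = N * (L : ℝ) ^ (N - 1)) :
    ∀ i, k ≤ i → i < k + N → a i = L := by
  have hcard : #(Ico k (k + N)) = N := by rw [Nat.card_Ico, Nat.add_sub_cancel_left]
  rw [remainder_eq_sum_Ico h0] at heq
  intro i hki hi
  exact_mod_cast eq_of_prod_mul_sum_one_div_eq (s := Ico k (k + N)) (L := (L : ℝ))
    (x := fun i ↦ (a i : ℝ)) (by rwa [hcard]) (fun i _ ↦ mod_cast ha i)
    (fun i hi ↦ mod_cast hL i (mem_Ico.1 hi).2)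
    (by rwa [hcard]) i (mem_Ico.2 ⟨hki, hi⟩)

lemma cast_mul_prod_range_add (g : ℕ) (a : ℕ → ℕ) (k N : ℕ) :
    ((g * ∏ i ∈ range (k + N), a i : ℕ) : ℝ) =
      (g * ∏ i ∈ range k, a i : ℕ) * ∏ i ∈ Ico k (k + N), (a i : ℝ) := by
  rw [← prod_range_mul_prod_Ico _ (Nat.le_add_right k N)]
  push_cast
  ring

theorem mul_prod_le_three_mul (hg : 0 < g) (ha : ∀ i, 0 < a i) (hm : Monotone a)
    (h0 : remainder g a (m + 3) = 0) (hL : ∀ i < m + 3, a i ≤ L)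
    (hsorted : ∀ i < m, remainder g a m ≤ 1 / a i) :
    g * ∏ i ∈ range (m + 3), a i ≤ 3 * tsylv g (m + 1) ^ 2 * L ^ 2 ∧
      (g * ∏ i ∈ range (m + 3), a i = 3 * tsylv g (m + 1) ^ 2 * L ^ 2 →
        ∀ i < m + 3, a i = sylvTail g m 3 i) := by
  have hL0 : 0 < L := (ha m).trans_le (hL m (by omega))
  have ht : (0 : ℝ) < tsylv g (m + 1) ^ 2 := pow_pos (mod_cast tsylv_pos hg m) 2
  obtain ⟨hhead, hhead_eq⟩ := mul_prod_le_of_remainder_le (e := 1) hg ha hm one_pos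
    (remainder_pos (by omega) h0 ha) (by simpa only [Nat.cast_one, one_mul] using hsorted)
  have htail := prod_Ico_mul_remainder_le ha h0 hL
  rw [pow_one, one_add_one_eq_two] at hhead hhead_eq
  obtain ⟨hle, heq⟩ :=
    mul_le_of_le_mul ht (prod_pos fun i _ ↦ mod_cast ha i) hhead htail
  rw [← cast_mul_prod_range_add, mul_left_comm, ← mul_assoc] at hle heq
  refine ⟨by exact_mod_cast hle, fun h ↦ ?_⟩
  obtain ⟨hheadR, htailR⟩ := heq (by exact_mod_cast h)
  exact eq_sylvTail hg hL0 h0 (hhead_eq hheadR)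
    (eq_of_prod_Ico_mul_remainder_eq (by norm_num) ha h0 hL htailR)

theorem mul_prod_le_sixteen_mul (hg : 0 < g) (ha : ∀ i, 0 < a i) (hm : Monotone a)
    (h0 : remainder g a (k + 4) = 0) (hL : ∀ i < k + 4, a i ≤ L)
    (hlow : 1 / a k ≤ remainder g a (k + 1)) :
    g * ∏ i ∈ range (k + 4), a i ≤ 16 * tsylv g (k + 1) ^ 3 * L ^ 2 ∧
      (g * ∏ i ∈ range (k + 4), a i = 16 * tsylv g (k + 1) ^ 3 * L ^ 2 →
        ∀ i < k + 4, a i = sylvTail g k 4 i) := by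
  have hL0 : 0 < L := (ha k).trans_le (hL k (by omega))
  have ht : (0 : ℝ) < 16 * tsylv g (k + 1) ^ 3 :=
    mul_pos (by norm_num) (pow_pos (mod_cast tsylv_pos hg k) 3)
  have hupp : remainder g a (k + 1) ≤ 3 * (1 / a k) :=
    remainder_le_mul_one_div (N := 3) h0 ha hm k.le_succ
  obtain ⟨hhead, hhead_eq⟩ := three_mul_mul_prod_succ_le hg ha hm hlow hupp
  have htail := prod_Ico_mul_remainder_le (k := k + 1) (N := 3) ha h0 hL
  obtain ⟨hle, heq⟩ :=
    mul_le_of_le_mul ht (prod_pos fun i _ ↦ mod_cast ha i) hhead htail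
  rw [mul_assoc 3, ← cast_mul_prod_range_add, Nat.cast_ofNat, mul_left_comm,
    mul_le_mul_iff_right₀ three_pos] at hle
  rw [mul_assoc 3, ← cast_mul_prod_range_add, Nat.cast_ofNat, mul_left_comm] at heq
  refine ⟨by exact_mod_cast hle, fun h ↦ ?_⟩
  obtain ⟨hheadR, htailR⟩ := heq (congrArg (3 * ·) (by exact_mod_cast h))
  have htail' := eq_of_prod_Ico_mul_remainder_eq (k := k + 1) (by norm_num) ha h0 hL htailR
  obtain ⟨hhead', hR⟩ := hhead_eq hheadR
  have hak : a k = L := by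
    rw [remainder_eq_sum_Ico (N := 3) h0, sum_congr rfl fun i hi ↦ by
      rw [htail' i (mem_Ico.1 hi).1 (mem_Ico.1 hi).2], sum_const, Nat.card_Ico,
      Nat.add_sub_cancel_left, nsmul_eq_mul, Nat.cast_ofNat,
      mul_right_inj' three_ne_zero] at hR
    exact_mod_cast (eq_of_one_div_eq_one_div hR).symm
  refine eq_sylvTail hg hL0 h0 hhead' fun i hki hi ↦ ?_
  obtain rfl | hki := hki.eq_or_lt
  exacts [hak, htail' i hki hi]

end ThreeTerms

section Partition

variable {g n k m : ℕ}

/-- The extension of a finite sequence of length `n + 1` to `ℕ` that repeats the last term. -/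
def extendLast (A : Fin (n + 1) → ℕ) (i : ℕ) : ℕ := A (Fin.clamp i n)

lemma extendLast_val (A : Fin (n + 1) → ℕ) (i : Fin (n + 1)) : extendLast A i = A i :=
  congrArg A (Fin.ext (min_eq_left (Nat.le_of_lt_succ i.isLt)))

lemma monotone_extendLast {A : Fin (n + 1) → ℕ} (hm : Monotone A) : Monotone (extendLast A) :=
  hm.comp Fin.clamp_monotone

lemma prod_range_extendLast (A : Fin (n + 1) → ℕ) :
    ∏ i ∈ range (n + 1), extendLast A i = ∏ i, A i := by
  rw [← Fin.prod_univ_eq_prod_range (extendLast A), prod_congr rfl fun i _ ↦ extendLast_val A i]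

lemma IsUFP.lcm_pos {A : Fin n → ℕ} (hA : IsUFP g A) : 0 < univ.lcm A :=
  Nat.pos_of_ne_zero fun h ↦
    let ⟨i, _, hi⟩ := Finset.lcm_eq_zero_iff.1 h
    (hA.1 i).ne' hi

lemma extendLast_le_lcm {A : Fin (n + 1) → ℕ} (hA : IsUFP g A) (i : ℕ) :
    extendLast A i ≤ univ.lcm A :=
  Nat.le_of_dvd hA.lcm_pos (dvd_lcm (mem_univ _))

lemma remainder_extendLast {A : Fin (n + 1) → ℕ} (hA : IsUFP g A) :
    remainder g (extendLast A) (n + 1) = 0 := by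
  have h := congrArg ((↑) : ℚ → ℝ) hA.2
  push_cast at h
  rw [remainder, ← Fin.sum_univ_eq_sum_range (fun i ↦ 1 / (extendLast A i : ℝ)), h, sub_eq_zero]
  exact sum_congr rfl fun i _ ↦ by rw [extendLast_val]

theorem IsUFP.mul_prod_le (hg : 0 < g) {A : Fin (m + 3) → ℕ} (hA : IsUFP g A) (hm : Monotone A) :
    (g * ∏ i, A i ≤ 3 * tsylv g (m + 1) ^ 2 * univ.lcm A ^ 2 ∧
      (g * ∏ i, A i = 3 * tsylv g (m + 1) ^ 2 * univ.lcm A ^ 2 → ∀ i, A i = sylvTail g m 3 i)) ∨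
    ∃ k, m = k + 1 ∧ g * ∏ i, A i ≤ 16 * tsylv g (k + 1) ^ 3 * univ.lcm A ^ 2 ∧
      (g * ∏ i, A i = 16 * tsylv g (k + 1) ^ 3 * univ.lcm A ^ 2 →
        ∀ i, A i = sylvTail g k 4 i) := by
  have ha : ∀ i, 0 < extendLast A i := fun i ↦ hA.1 _
  have hmono := monotone_extendLast hm
  have h0 := remainder_extendLast hA
  have hL : ∀ i < m + 3, extendLast A i ≤ univ.lcm A := fun i _ ↦ extendLast_le_lcm hA i
  rw [← prod_range_extendLast A]
  by_cases hsorted : ∀ i < m, remainder g (extendLast A) m ≤ 1 / extendLast A i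
  · obtain ⟨hle, heq⟩ := mul_prod_le_three_mul hg ha hmono h0 hL hsorted
    exact .inl ⟨hle, fun h i ↦ extendLast_val A i ▸ heq h i i.isLt⟩
  · push Not at hsorted
    obtain ⟨i, hi, hlt⟩ := hsorted
    obtain ⟨k, rfl⟩ : ∃ k, m = k + 1 := ⟨m - 1, by omega⟩
    obtain ⟨hle, heq⟩ := mul_prod_le_sixteen_mul hg ha hmono h0 hL
      ((antitone_one_div ha hmono (Nat.le_of_lt_succ hi)).trans hlt.le)
    exact .inr ⟨k, rfl, hle, fun h i ↦ extendLast_val A i ▸ heq h i i.isLt⟩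

theorem IsUFP.mul_prod_le_of_tsylv_lt_three (hg : 0 < g) {A : Fin (k + 4) → ℕ} (hA : IsUFP g A)
    (hm : Monotone A) (ht : tsylv g (k + 1) < 3) :
    g * ∏ i, A i ≤ 16 * tsylv g (k + 1) ^ 3 * univ.lcm A ^ 2 ∧
      (g * ∏ i, A i = 16 * tsylv g (k + 1) ^ 3 * univ.lcm A ^ 2 ↔ ∀ i, A i = sylvTail g k 4 i) := by
  have hsylv : (∀ i, A i = sylvTail g k 4 i) →
      g * ∏ i, A i = 16 * tsylv g (k + 1) ^ 3 * univ.lcm A ^ 2 := fun h ↦ by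
    rw [funext h, mul_prod_sylvTail, lcm_sylvTail g k four_pos]
    ring
  rcases hA.mul_prod_le (m := k + 1) hg hm with ⟨hle, -⟩ | ⟨l, hl, hle, heq⟩
  · have hlt : g * ∏ i, A i < 16 * tsylv g (k + 1) ^ 3 * univ.lcm A ^ 2 := by
      refine hle.trans_lt (Nat.mul_lt_mul_of_pos_right ?_ (pow_pos hA.lcm_pos 2))
      exact tsylv_succ_succ g k ▸ three_mul_sq_lt (tsylv_pos hg k) ht
    exact ⟨hlt.le, fun h ↦ absurd h hlt.ne, hsylv⟩
  · obtain rfl : k = l := Nat.succ.inj hl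
    exact ⟨hle, heq, hsylv⟩

lemma IsUFP.eq_three_of_forall_eq_twelve {A : Fin 4 → ℕ} (hA : IsUFP g A)
    (h : ∀ i, A i = 12) : g = 3 := by
  have hsum := hA.2
  simp only [h, sum_const, card_univ, Fintype.card_fin, nsmul_eq_mul, Nat.cast_ofNat] at hsum
  have hg : (g : ℚ) = 3 := by
    rw [← one_div_one_div (g : ℚ), hsum]
    norm_num
  exact_mod_cast hg

theorem IsUFP.mul_prod_le_of_three_le_tsylv (hg : 0 < g) {A : Fin (m + 3) → ℕ} (hA : IsUFP g A)
    (hm : Monotone A) (ht : ∀ k, m = k + 1 → 3 ≤ tsylv g (k + 1)) :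
    g * ∏ i, A i ≤ 3 * tsylv g (m + 1) ^ 2 * univ.lcm A ^ 2 ∧
      (g * ∏ i, A i = 3 * tsylv g (m + 1) ^ 2 * univ.lcm A ^ 2 ↔
        (m + 3 = 4 ∧ ∀ i, A i = 12) ∨ ∀ i, A i = sylvTail g m 3 i) := by
  have hsylv : (m + 3 = 4 ∧ ∀ i, A i = 12) ∨ (∀ i, A i = sylvTail g m 3 i) →
      g * ∏ i, A i = 3 * tsylv g (m + 1) ^ 2 * univ.lcm A ^ 2 := by
    rintro (⟨hm4, h⟩ | h)
    · obtain rfl : m = 1 := by omega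
      obtain rfl := hA.eq_three_of_forall_eq_twelve h
      rw [funext h]
      decide
    · rw [funext h, mul_prod_sylvTail, lcm_sylvTail g m three_pos]
      ring
  rcases hA.mul_prod_le hg hm with ⟨hle, heq⟩ | ⟨k, rfl, hle, heq⟩
  · exact ⟨hle, fun h ↦ .inr (heq h), hsylv⟩
  rcases (ht k rfl).eq_or_lt with h3 | h3
  · obtain ⟨rfl, rfl⟩ := tsylv_succ_eq_three_iff.1 h3.symm
    exact ⟨hle, fun h ↦ .inl ⟨rfl, heq h⟩, hsylv⟩
  · have hlt : g * ∏ i, A i < 3 * tsylv g (k + 2) ^ 2 * univ.lcm A ^ 2 := by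
      refine hle.trans_lt (Nat.mul_lt_mul_of_pos_right ?_ (pow_pos hA.lcm_pos 2))
      exact tsylv_succ_succ g k ▸ sixteen_mul_lt h3
    exact ⟨hlt.le, fun h ↦ absurd h hlt.ne, hsylv⟩

lemma div_sq_le_and_eq_iff {p B L : ℕ} {F : ℚ} {Q : Prop} (hg : 0 < g) (hL : 0 < L)
    (hF : F * g = B) (h : g * p ≤ B * L ^ 2 ∧ (g * p = B * L ^ 2 ↔ Q)) :
    (p : ℚ) / (L : ℚ) ^ 2 ≤ F ∧ ((p : ℚ) / (L : ℚ) ^ 2 = F ↔ Q) := by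
  have hL' : (0 : ℚ) < (L : ℚ) ^ 2 := pow_pos (mod_cast hL) 2
  have hg' : (0 : ℚ) < g := mod_cast hg
  have hscale : F * L ^ 2 * g = (B * L ^ 2 : ℕ) := by
    push_cast
    rw [← hF]
    ring
  rw [div_le_iff₀ hL', div_eq_iff hL'.ne', ← mul_le_mul_iff_left₀ hg', ← mul_left_inj' hg'.ne',
    hscale, mul_comm (p : ℚ)]
  exact_mod_cast h

end Partition

/-- Let `A = (α₁,…,αₙ)` be a unit fraction partition of `g ≥ 1`
with `n ≥ 3` and `α₁ ≤ ⋯ ≤ αₙ`, and set `F_{n-2}(A) = (α₁⋯αₙ)/lcm(α₁,…,αₙ)²`.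
If `n = 4` and `g ∈ {1,2}` then `F_{n-2}(A) ≤ 16g²` with equality iff
`A = (4g,4g,4g,4g)`. If `(n,g) = (5,1)` then `F_{n-2}(A) ≤ 128` with equality iff
`A = (2,8,8,8,8)`. In all other cases `F_{n-2}(A) ≤ 3·t_{g,n-2}²/g`, with equality
iff `A` is one of `(12,12,12,12)` or
`(s_{g,1},…,s_{g,n-3},3t_{g,n-2},3t_{g,n-2},3t_{g,n-2})`. -/
theorem ufp_Fnm2_bound
    (g n : ℕ) (hg : 1 ≤ g) (hn : 3 ≤ n)
    (A : Fin n → ℕ) (hA : IsUFP g A) (hmono : Monotone A) :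
    (n = 4 ∧ (g = 1 ∨ g = 2) →
      ((∏ i, A i : ℕ) : ℚ) / ((Finset.univ.lcm A : ℕ) : ℚ) ^ 2 ≤ 16 * (g : ℚ) ^ 2 ∧
        (((∏ i, A i : ℕ) : ℚ) / ((Finset.univ.lcm A : ℕ) : ℚ) ^ 2 = 16 * (g : ℚ) ^ 2 ↔
          ∀ i, A i = 4 * g)) ∧
    (n = 5 ∧ g = 1 →
      ((∏ i, A i : ℕ) : ℚ) / ((Finset.univ.lcm A : ℕ) : ℚ) ^ 2 ≤ 128 ∧
        (((∏ i, A i : ℕ) : ℚ) / ((Finset.univ.lcm A : ℕ) : ℚ) ^ 2 = 128 ↔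
          ∀ i : Fin n, A i = if i.val = 0 then 2 else 8)) ∧
    (¬(n = 4 ∧ (g = 1 ∨ g = 2)) ∧ ¬(n = 5 ∧ g = 1) →
      ((∏ i, A i : ℕ) : ℚ) / ((Finset.univ.lcm A : ℕ) : ℚ) ^ 2 ≤
          3 * (tsylv g (n - 2) : ℚ) ^ 2 / (g : ℚ) ∧
        (((∏ i, A i : ℕ) : ℚ) / ((Finset.univ.lcm A : ℕ) : ℚ) ^ 2 =
            3 * (tsylv g (n - 2) : ℚ) ^ 2 / (g : ℚ) ↔
          (n = 4 ∧ ∀ i, A i = 12) ∨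
          (∀ i : Fin n, A i =
            if i.val + 1 ≤ n - 3 then sylv g (i.val + 1) else 3 * tsylv g (n - 2)))) := by
  obtain ⟨m, rfl⟩ := Nat.exists_eq_add_of_le' hn
  refine ⟨?_, ?_, ?_⟩
  · rintro ⟨hm, hg2⟩
    obtain rfl : m = 1 := by omega
    have hbound := hA.mul_prod_le_of_tsylv_lt_three (k := 0) hg hmono (by rw [tsylv_one]; omega)
    exact div_sq_le_and_eq_iff hg hA.lcm_pos (by push_cast [tsylv_one]; ring) hbound
  · rintro ⟨hm, rfl⟩
    obtain rfl : m = 2 := by omega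
    have hbound := hA.mul_prod_le_of_tsylv_lt_three (k := 1) hg hmono (by decide)
    simp only [sylvTail_one_one_four] at hbound
    exact div_sq_le_and_eq_iff (B := 128) hg hA.lcm_pos (by norm_num) hbound
  · rintro ⟨h4, h5⟩
    have hbound := hA.mul_prod_le_of_three_le_tsylv hg hmono fun k hk ↦
      three_le_tsylv_succ hg (by omega) (by omega)
    have hg' : (g : ℚ) ≠ 0 := by positivity
    exact div_sq_le_and_eq_iff hg hA.lcm_pos (by push_cast; field_simp) hbound
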